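/- Let n ≥ 1 be a natural number and let N and ξ₁ be real numbers with 0 < ξ₁ < N. Then the principal value integral T_{2n,N}(ξ₁) = p.v.∫_{-N}^{N} t^{2n}/(ξ₁² - t²) dt exists and equals P_{2n-1}(N, ξ₁) + ξ₁^{2n-1} · ln((N + ξ₁)/(N - ξ₁)), where P_{2n-1}(N, ξ₁) = -∑_{j=1}^{n} (2/(2j-1)) · N^{2j-1} · ξ₁^{2(n-j)} is a polynomial of degree 2n-1 in the variables N, ξ₁. (This is the paper's general evaluation of T_{2n,N}, with the polynomial P_{2n-1} made explicit.) -/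

import Mathlib

open MeasureTheory Filter Set

noncomputable def pvG (n : ℕ) (x t : ℝ) : ℝ :=
  ∑ j ∈ Finset.range n, (1 / (2 * (j : ℝ) + 1)) * t ^ (2 * j + 1) * (x ^ 2) ^ (n - 1 - j)

noncomputable def pvF (n : ℕ) (x t : ℝ) : ℝ :=
  - pvG n x t + x ^ (2 * n - 1) / 2 * (Real.log (x + t) - Real.log (x - t))

lemma pvG_deriv (n : ℕ) (x t : ℝ) :
    HasDerivAt (pvG n x) (∑ j ∈ Finset.range n, (t ^ 2) ^ j * (x ^ 2) ^ (n - 1 - j)) t := by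
  unfold pvG
  apply HasDerivAt.fun_sum
  intro j _
  have h := ((hasDerivAt_pow (2 * j + 1) t).const_mul (1 / (2 * (j : ℝ) + 1))).mul_const
    ((x ^ 2) ^ (n - 1 - j))
  refine HasDerivAt.congr_deriv h ?_
  symm
  have : (2 * (j : ℝ) + 1) ≠ 0 := by positivity
  push_cast
  rw [pow_mul]
  field_simp

lemma pvF_deriv (n : ℕ) (hn : 1 ≤ n) (x t : ℝ) (h1 : x + t ≠ 0) (h2 : x - t ≠ 0) :
    HasDerivAt (pvF n x) (t ^ (2 * n) / (x ^ 2 - t ^ 2)) t := by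
  have ha : HasDerivAt (fun t => Real.log (x + t)) (1 / (x + t)) t :=
    ((hasDerivAt_id t).const_add x).log h1
  have hb : HasDerivAt (fun t => Real.log (x - t)) (-1 / (x - t)) t :=
    ((hasDerivAt_id t).const_sub x).log h2
  have h := (pvG_deriv n x t).neg.add ((ha.sub hb).const_mul (x ^ (2 * n - 1) / 2))
  have hg := (Commute.all (t ^ 2) (x ^ 2)).geom_sum₂_mul n
  have h3 : x ^ 2 - t ^ 2 ≠ 0 := by
    have : x ^ 2 - t ^ 2 = (x + t) * (x - t) := by ring
    rw [this]; exact mul_ne_zero h1 h2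
  refine HasDerivAt.congr_deriv h ?_
  symm
  obtain ⟨m, rfl⟩ : ∃ m, n = m + 1 := ⟨n - 1, by omega⟩
  set S := ∑ j ∈ Finset.range (m + 1), (t ^ 2) ^ j * (x ^ 2) ^ (m + 1 - 1 - j)
  have e : 2 * (m + 1) - 1 = 2 * m + 1 := by omega
  rw [e]
  have e2 : 1 / (x + t) - -1 / (x - t) = 2 * x / (x ^ 2 - t ^ 2) := by
    have : x ^ 2 - t ^ 2 = (x + t) * (x - t) := by ring
    rw [this]; field_simp; ring
  rw [e2]
  rw [← pow_mul, ← pow_mul] at hg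
  field_simp
  linear_combination -hg

lemma pvF_odd (n : ℕ) (x t : ℝ) : pvF n x (-t) = - pvF n x t := by
  have : pvG n x (-t) = - pvG n x t := by
    unfold pvG
    rw [← Finset.sum_neg_distrib]
    refine Finset.sum_congr rfl fun j _ => ?_
    rw [Odd.neg_pow ⟨j, rfl⟩]; ring
  unfold pvF
  rw [this, sub_neg_eq_add, ← sub_eq_add_neg]; ring

lemma pv_piece (n : ℕ) (hn : 1 ≤ n) (x a b : ℝ) (hab : a ≤ b)
    (h : ∀ t ∈ Icc a b, x + t ≠ 0 ∧ x - t ≠ 0) :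
    IntegrableOn (fun t : ℝ => t ^ (2 * n) / (x ^ 2 - t ^ 2)) (Icc a b) ∧
    ∫ t in Ioc a b, t ^ (2 * n) / (x ^ 2 - t ^ 2) = pvF n x b - pvF n x a := by
  have hc : ContinuousOn (fun t : ℝ => t ^ (2 * n) / (x ^ 2 - t ^ 2)) (Icc a b) := by
    apply ContinuousOn.div (by fun_prop) (by fun_prop)
    intro t ht
    have : x ^ 2 - t ^ 2 = (x + t) * (x - t) := by ring
    rw [this]; exact mul_ne_zero (h t ht).1 (h t ht).2
  refine ⟨hc.integrableOn_Icc, ?_⟩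
  rw [← intervalIntegral.integral_of_le hab]
  apply intervalIntegral.integral_eq_sub_of_hasDerivAt
  · intro t ht
    rw [uIcc_of_le hab] at ht
    exact pvF_deriv n hn x t (h t ht).1 (h t ht).2
  · apply ContinuousOn.intervalIntegrable
    rwa [uIcc_of_le hab]

lemma pv_eq (n : ℕ) (hn : 1 ≤ n) (N x ε : ℝ) (h0 : 0 < x) (he : 0 < ε)
    (h1 : ε < x) (h2 : ε < N - x) :
    ∫ t in Ioo (-N) N \ (Ioo (x - ε) (x + ε) ∪ Ioo (-x - ε) (-x + ε)),
          t ^ (2 * n) / (x ^ 2 - t ^ 2) =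
    2 * pvF n x N + 2 * (pvF n x (x - ε) - pvF n x (x + ε)) := by
  have hs : Ioo (-N) N \ (Ioo (x - ε) (x + ε) ∪ Ioo (-x - ε) (-x + ε)) =
      (Ioc (-N) (-(x + ε)) ∪ Icc (-(x - ε)) (x - ε)) ∪ Ico (x + ε) N := by
    ext t
    simp only [Set.mem_sdiff, mem_union, mem_Ioo, mem_Ioc, mem_Icc, mem_Ico]
    grind
  obtain ⟨i1, e1⟩ := pv_piece n hn x (-N) (-(x + ε)) (by linarith) (by
    rintro t ⟨_, _⟩; constructor <;> intro h <;> linarith)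
  obtain ⟨i2, e2⟩ := pv_piece n hn x (-(x - ε)) (x - ε) (by linarith) (by
    rintro t ⟨_, _⟩; constructor <;> intro h <;> linarith)
  obtain ⟨i3, e3⟩ := pv_piece n hn x (x + ε) N (by linarith) (by
    rintro t ⟨_, _⟩; constructor <;> intro h <;> linarith)
  have j1 := i1.mono_set Ioc_subset_Icc_self
  have j3 := i3.mono_set Ico_subset_Icc_self
  rw [hs, setIntegral_union _ measurableSet_Ico (j1.union i2) j3,
    setIntegral_union _ measurableSet_Icc j1 i2, integral_Icc_eq_integral_Ioc,
    integral_Ico_eq_integral_Ioo, ← integral_Ioc_eq_integral_Ioo, e1, e2, e3,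
    pvF_odd, pvF_odd, pvF_odd]
  · ring
  · rw [Set.disjoint_left]
    rintro t ⟨_, _⟩ ⟨_, _⟩
    linarith
  · rw [Set.disjoint_left]
    rintro t (⟨_, _⟩ | ⟨_, _⟩) ⟨_, _⟩ <;> linarith

/-- For `n ≥ 1` and `0 < ξ₁ < N`, the principal value integral
`T_{2n,N}(ξ₁) = p.v.∫_{-N}^{N} t^{2n}/(ξ₁² - t²) dt` exists and equals
`P_{2n-1}(N, ξ₁) + ξ₁^{2n-1} · ln((N + ξ₁)/(N - ξ₁))`, where
`P_{2n-1}(N, ξ₁) = -∑_{j=1}^{n} (2/(2j-1)) N^{2j-1} ξ₁^{2(n-j)}`. -/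
theorem pv_integral_even_pow_div_sq_sub_sq (n : ℕ) (hn : 1 ≤ n) (N ξ₁ : ℝ)
    (h0 : 0 < ξ₁) (hN : ξ₁ < N) :
    Tendsto (fun ε : ℝ =>
        ∫ t in Ioo (-N) N \ (Ioo (ξ₁ - ε) (ξ₁ + ε) ∪ Ioo (-ξ₁ - ε) (-ξ₁ + ε)),
          t ^ (2 * n) / (ξ₁ ^ 2 - t ^ 2))
      (nhdsWithin 0 (Ioi 0))
      (nhds ((-∑ j ∈ Finset.Icc 1 n, (2 / (2 * (j : ℝ) - 1)) * N ^ (2 * j - 1) * ξ₁ ^ (2 * (n - j)))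
        + ξ₁ ^ (2 * n - 1) * Real.log ((N + ξ₁) / (N - ξ₁)))) := by
  have hval : (-∑ j ∈ Finset.Icc 1 n, (2 / (2 * (j : ℝ) - 1)) * N ^ (2 * j - 1) * ξ₁ ^ (2 * (n - j)))
        + ξ₁ ^ (2 * n - 1) * Real.log ((N + ξ₁) / (N - ξ₁)) = 2 * pvF n ξ₁ N := by
    have hS : ∑ j ∈ Finset.Icc 1 n, (2 / (2 * (j : ℝ) - 1)) * N ^ (2 * j - 1) * ξ₁ ^ (2 * (n - j))
        = 2 * pvG n ξ₁ N := by
      unfold pvG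
      rw [← Finset.Ico_add_one_right_eq_Icc, Finset.sum_Ico_eq_sum_range, Finset.mul_sum]
      refine Finset.sum_congr (by simp) fun j _ => ?_
      have a1 : 2 * (1 + j) - 1 = 2 * j + 1 := by omega
      have a2 : n - (1 + j) = n - 1 - j := by omega
      have a3 : 2 * ((1 + j : ℕ) : ℝ) - 1 = 2 * (j : ℝ) + 1 := by push_cast; ring
      rw [a1, a2, a3, pow_mul ξ₁]; ring
    have hl : Real.log (ξ₁ - N) = Real.log (N - ξ₁) := by
      rw [← Real.log_neg_eq_log, neg_sub]
    rw [hS, Real.log_div (by linarith) (by linarith)]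
    unfold pvF
    rw [hl, add_comm ξ₁ N]; ring
  rw [hval]
  have hGc : Continuous (pvG n ξ₁) :=
    continuous_iff_continuousAt.2 fun t => (pvG_deriv n ξ₁ t).continuousAt
  have hlim : Tendsto (fun ε : ℝ => 2 * pvF n ξ₁ N + 2 * (pvG n ξ₁ (ξ₁ + ε) - pvG n ξ₁ (ξ₁ - ε) +
      ξ₁ ^ (2 * n - 1) / 2 * (Real.log (2 * ξ₁ - ε) - Real.log (2 * ξ₁ + ε))))
      (nhdsWithin 0 (Ioi 0)) (nhds (2 * pvF n ξ₁ N)) := by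
    apply tendsto_nhdsWithin_of_tendsto_nhds
    have hc : ContinuousAt (fun ε : ℝ => 2 * pvF n ξ₁ N + 2 * (pvG n ξ₁ (ξ₁ + ε) - pvG n ξ₁ (ξ₁ - ε) +
      ξ₁ ^ (2 * n - 1) / 2 * (Real.log (2 * ξ₁ - ε) - Real.log (2 * ξ₁ + ε)))) 0 := by
      have l1 : ContinuousAt (fun ε : ℝ => Real.log (2 * ξ₁ - ε)) 0 :=
        ContinuousAt.log (by fun_prop) (by simp [h0.ne'])
      have l2 : ContinuousAt (fun ε : ℝ => Real.log (2 * ξ₁ + ε)) 0 :=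
        ContinuousAt.log (by fun_prop) (by simp [h0.ne'])
      fun_prop
    have := hc.tendsto
    simpa using this
  refine hlim.congr' ?_
  have m1 : Ioo (0 : ℝ) (min ξ₁ (N - ξ₁)) ∈ nhdsWithin (0 : ℝ) (Ioi 0) :=
    Ioo_mem_nhdsGT (lt_min h0 (by linarith))
  filter_upwards [m1] with ε hε
  obtain ⟨he, hm⟩ := hε
  rw [pv_eq n hn N ξ₁ ε h0 he (lt_of_lt_of_le hm (min_le_left _ _))
    (lt_of_lt_of_le hm (min_le_right _ _))]
  have b1 : ξ₁ + (ξ₁ - ε) = 2 * ξ₁ - ε := by ring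
  have b2 : ξ₁ + (ξ₁ + ε) = 2 * ξ₁ + ε := by ring
  have b3 : ξ₁ - (ξ₁ - ε) = ε := by ring
  have b4 : ξ₁ - (ξ₁ + ε) = -ε := by ring
  have : pvF n ξ₁ (ξ₁ - ε) - pvF n ξ₁ (ξ₁ + ε) = pvG n ξ₁ (ξ₁ + ε) - pvG n ξ₁ (ξ₁ - ε) +
      ξ₁ ^ (2 * n - 1) / 2 * (Real.log (2 * ξ₁ - ε) - Real.log (2 * ξ₁ + ε)) := by
    unfold pvF
    rw [b1, b2, b3, b4, Real.log_neg_eq_log]; ring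
  rw [this]
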